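/- Let R = F₂+uF₂, G a finite group of order n, and v₁, v₂, v₃ ∈ RG. Let A be the 2n×2n block matrix with blocks σ(v₁), σ(v₂) in the first block row and σ(v₂), σ(v₃) in the second block row, and let C_σ ⊆ R^{4n} be the R-span of the rows of the 2n×4n matrix (I_{2n} | A). Then C_σ is a self-dual code of length 4n over R if and only if σ(v₁v₁* + v₂v₂*) = Iₙ, σ(v₁v₂* + v₂v₃*) = 0, σ(v₂v₁* + v₃v₂*) = 0, and σ(v₂v₂* + v₃v₃*) = Iₙ. -/

import Mathlib

open Matrix

/-- The four-element ring `F₂ + uF₂ = F₂[u]`, `u² = 0`: the dual numbers over `ZMod 2`. -/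
abbrev F2u : Type := DualNumber (ZMod 2)

/-- For `v = ∑ α_g g` in the group ring `RG`, `σ(v)` is the `G × G` matrix over `R` whose
`(g, h)` entry is the coefficient `α_{g⁻¹h}`. -/
def sigma {R G : Type*} [CommRing R] [Group G] (v : MonoidAlgebra R G) : Matrix G G R :=
  Matrix.of fun g h => v.coeff (g⁻¹ * h)

/-- The canonical involution on a group ring: `v* = ∑ α_g g⁻¹` for `v = ∑ α_g g`. -/
def invol {R G : Type*} [CommRing R] [Group G] (v : MonoidAlgebra R G) : MonoidAlgebra R G :=
  MonoidAlgebra.ofCoeff (Finsupp.equivMapDomain (Equiv.inv G) v.coeff)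

/-- The Euclidean dual of a set of vectors `C ⊆ Rⁿ`. -/
def dualCode {R : Type*} [CommRing R] {ι : Type*} [Fintype ι] (C : Set (ι → R)) :
    Set (ι → R) :=
  {x | ∀ y ∈ C, ∑ i, x i * y i = 0}

/-!
The code generated by `(I | A)` consists of the pairs `(x, Aᵀx)`, and its Euclidean dual of the
pairs `(-Az, z)`. Since `(I | A)(I | A)ᵀ = I + AAᵀ`, the code is self-orthogonal if and only
if `AAᵀ = -I`. In that case also `AᵀA = -I`, because `A` is square, so that `(-Az, z) = (x, Aᵀx)`
with `x = -Az`, and the dual is contained in the code. As `σ` is multiplicative and turns the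
involution into the transpose, the blocks of `AAᵀ` are the values of `σ` on group ring elements.
In characteristic two, `-I = I`.
-/

section RowCode

variable {R m n : Type*} [CommRing R]

/-- The linear code with generator matrix `M`, whose rows are allowed to be linearly dependent. -/
def rowCode (M : Matrix m n R) : Submodule R (n → R) :=
  Submodule.span R (Set.range M.row)

theorem mem_rowCode_iff [Fintype m] {M : Matrix m n R} {w : n → R} :
    w ∈ rowCode M ↔ ∃ x, x ᵥ* M = w := by
  rw [rowCode, ← range_vecMulLinear, LinearMap.mem_range]
  rfl

theorem rowCode_le_iff {M : Matrix m n R} {C : Submodule R (n → R)} :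
    rowCode M ≤ C ↔ ∀ i, M i ∈ C :=
  Submodule.span_le.trans Set.range_subset_iff

variable [Fintype n]

theorem mem_dualCode_rowCode_iff {M : Matrix m n R} {w : n → R} :
    w ∈ dualCode (rowCode M : Set (n → R)) ↔ M *ᵥ w = 0 :=
  calc w ∈ dualCode (rowCode M : Set (n → R))
    _ ↔ rowCode M ≤ LinearMap.ker (dotProductBilin R R w) := Iff.rfl
    _ ↔ ∀ i, w ⬝ᵥ M i = 0 := rowCode_le_iff
    _ ↔ M *ᵥ w = 0 := by simp only [funext_iff, mulVec, dotProduct_comm w, Pi.zero_apply]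

theorem rowCode_subset_dualCode_iff {M : Matrix m n R} :
    (rowCode M : Set (n → R)) ⊆ dualCode (rowCode M : Set (n → R)) ↔ M * Mᵀ = 0 :=
  calc (rowCode M : Set (n → R)) ⊆ dualCode (rowCode M : Set (n → R))
    _ ↔ rowCode M ≤ LinearMap.ker M.mulVecLin :=
      forall₂_congr fun _ _ => mem_dualCode_rowCode_iff
    _ ↔ ∀ j, M *ᵥ M j = 0 := rowCode_le_iff
    _ ↔ M * Mᵀ = 0 := by
      simp only [funext_iff, ← Matrix.ext_iff]
      exact forall_comm

end RowCode

section SystematicCode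

variable {R m n : Type*} [CommRing R]

/-- The linear code with generator matrix `(I | A)` in standard form. Its coordinates are indexed
by `m ⊕ n`, the left summand carrying the information symbols. -/
def systematicCode [DecidableEq m] (A : Matrix m n R) : Submodule R (m ⊕ n → R) :=
  rowCode (fromCols (1 : Matrix m m R) A)

variable [Fintype m] [DecidableEq m]

theorem mem_systematicCode_iff {A : Matrix m n R} {w : m ⊕ n → R} :
    w ∈ systematicCode A ↔ (w ∘ Sum.inl) ᵥ* A = w ∘ Sum.inr := by
  simp only [systematicCode, mem_rowCode_iff, vecMul_fromCols, vecMul_one]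
  constructor
  · rintro ⟨x, rfl⟩
    rfl
  · intro h
    exact ⟨w ∘ Sum.inl, by rw [h, Sum.elim_comp_inl_inr]⟩

theorem mem_dualCode_systematicCode_iff [Fintype n] {A : Matrix m n R} {w : m ⊕ n → R} :
    w ∈ dualCode (systematicCode A : Set (m ⊕ n → R)) ↔
      w ∘ Sum.inl = -(A *ᵥ (w ∘ Sum.inr)) := by
  rw [systematicCode, mem_dualCode_rowCode_iff, fromCols_mulVec, one_mulVec, add_eq_zero_iff_eq_neg]

theorem systematicCode_subset_dualCode_iff [Fintype n] {A : Matrix m n R} :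
    (systematicCode A : Set (m ⊕ n → R)) ⊆ dualCode (systematicCode A : Set (m ⊕ n → R)) ↔
      A * Aᵀ = -1 := by
  rw [systematicCode, rowCode_subset_dualCode_iff, transpose_fromCols, fromCols_mul_fromRows,
    transpose_one, one_mul, add_comm, add_eq_zero_iff_eq_neg]

theorem dualCode_systematicCode_subset {A : Matrix m m R} (hA : A * Aᵀ = -1) :
    dualCode (systematicCode A : Set (m ⊕ m → R)) ⊆ systematicCode A := by
  intro w hw
  have transpose_mul : Aᵀ * A = -1 := by
    rw [← neg_eq_iff_eq_neg, ← neg_mul, mul_eq_one_comm, mul_neg, hA, neg_neg]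
  refine mem_systematicCode_iff.2 ?_
  calc (w ∘ Sum.inl) ᵥ* A
    _ = Aᵀ *ᵥ -(A *ᵥ (w ∘ Sum.inr)) := by
      rw [mem_dualCode_systematicCode_iff.1 hw, mulVec_transpose]
    _ = -((Aᵀ * A) *ᵥ (w ∘ Sum.inr)) := by rw [mulVec_neg, mulVec_mulVec]
    _ = w ∘ Sum.inr := by rw [transpose_mul, neg_mulVec, one_mulVec, neg_neg]

theorem systematicCode_eq_dualCode_iff {A : Matrix m m R} :
    (systematicCode A : Set (m ⊕ m → R)) = dualCode (systematicCode A : Set (m ⊕ m → R)) ↔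
      A * Aᵀ = -1 where
  mp h := systematicCode_subset_dualCode_iff.1 h.subset
  mpr h := (systematicCode_subset_dualCode_iff.2 h).antisymm (dualCode_systematicCode_subset h)

end SystematicCode

section GroupRing

variable {R G : Type*} [CommRing R] [Group G]

theorem sigma_add (v w : MonoidAlgebra R G) : sigma (v + w) = sigma v + sigma w := by
  ext g h
  simp [sigma]

theorem sigma_mul [Fintype G] (v w : MonoidAlgebra R G) :
    sigma (v * w) = sigma v * sigma w := by
  ext g h
  calc (v * w).coeff (g⁻¹ * h)
    _ = ∑ k, v.coeff k * w.coeff (k⁻¹ * (g⁻¹ * h)) := by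
      rw [MonoidAlgebra.coeff_mul_apply_left, Finsupp.sum_fintype _ _ fun _ => zero_mul _]
    _ = ∑ k, v.coeff (g⁻¹ * k) * w.coeff (k⁻¹ * h) := by
      rw [← Equiv.sum_comp (Equiv.mulLeft g⁻¹)]
      simp [mul_assoc]

theorem sigma_invol (v : MonoidAlgebra R G) : sigma (invol v) = (sigma v)ᵀ := by
  ext g h
  simp [sigma, invol]

theorem fromBlocks_sigma_mul_transpose [Fintype G] (v₁ v₂ v₃ v₄ : MonoidAlgebra R G) :
    fromBlocks (sigma v₁) (sigma v₂) (sigma v₃) (sigma v₄) *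
        (fromBlocks (sigma v₁) (sigma v₂) (sigma v₃) (sigma v₄))ᵀ =
      fromBlocks (sigma (v₁ * invol v₁ + v₂ * invol v₂)) (sigma (v₁ * invol v₃ + v₂ * invol v₄))
        (sigma (v₃ * invol v₁ + v₄ * invol v₂)) (sigma (v₃ * invol v₃ + v₄ * invol v₄)) := by
  simp only [fromBlocks_transpose, fromBlocks_multiply, sigma_add, sigma_mul, sigma_invol]

theorem groupRing_construction_selfDual_iff_over_F2u_general [Fintype G] [DecidableEq G]
    (v₁ v₂ v₃ v₄ : MonoidAlgebra R G) (C : Submodule R ((G ⊕ G) ⊕ (G ⊕ G) → R))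
    (hC : C = systematicCode (fromBlocks (sigma v₁) (sigma v₂) (sigma v₃) (sigma v₄))) :
    (C : Set ((G ⊕ G) ⊕ (G ⊕ G) → R)) = dualCode (C : Set ((G ⊕ G) ⊕ (G ⊕ G) → R)) ↔
      sigma (v₁ * invol v₁ + v₂ * invol v₂) = -1 ∧
      sigma (v₁ * invol v₃ + v₂ * invol v₄) = 0 ∧
      sigma (v₃ * invol v₁ + v₄ * invol v₂) = 0 ∧
      sigma (v₃ * invol v₃ + v₄ * invol v₄) = -1 := by
  rw [hC, systematicCode_eq_dualCode_iff, fromBlocks_sigma_mul_transpose, ← fromBlocks_one,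
    fromBlocks_neg, neg_zero, fromBlocks_inj]

end GroupRing

instance charP_dualNumber {R : Type*} [CommSemiring R] (p : ℕ) [CharP R p] :
    CharP (DualNumber R) p :=
  charP_of_injective_algebraMap (R := R) TrivSqZeroExt.inl_injective p

/-- Let `R = F₂+uF₂`, `G` a finite group of order `n`, and `v₁, v₂, v₃ ∈ RG`. Let
`A = [[σ(v₁), σ(v₂)], [σ(v₂), σ(v₃)]]` and let `C_σ ⊆ R^{4n}` be the `R`-span of the rows of
`(I_{2n} | A)`. Then `C_σ` is a self-dual code of length `4n` over `R` if and only if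
`σ(v₁v₁* + v₂v₂*) = Iₙ`, `σ(v₁v₂* + v₂v₃*) = 0`, `σ(v₂v₁* + v₃v₂*) = 0` and
`σ(v₂v₂* + v₃v₃*) = Iₙ`. -/
theorem groupRing_construction_selfDual_iff_over_F2u {G : Type*} [Group G] [Fintype G]
    [DecidableEq G] (n : ℕ) (hn : Fintype.card G = n) (v₁ v₂ v₃ : MonoidAlgebra F2u G)
    (A : Matrix (G ⊕ G) (G ⊕ G) F2u)
    (hA : A = Matrix.fromBlocks (sigma v₁) (sigma v₂) (sigma v₂) (sigma v₃))
    (C : Submodule F2u (((G ⊕ G) ⊕ (G ⊕ G)) → F2u))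
    (hC : C = Submodule.span F2u (Set.range fun k : G ⊕ G =>
      (Sum.elim (fun j => if k = j then (1 : F2u) else 0) (fun j => A k j) :
        ((G ⊕ G) ⊕ (G ⊕ G)) → F2u))) :
    (C : Set (((G ⊕ G) ⊕ (G ⊕ G)) → F2u)) =
        dualCode (C : Set (((G ⊕ G) ⊕ (G ⊕ G)) → F2u)) ↔
      (sigma (v₁ * invol v₁ + v₂ * invol v₂) = 1 ∧
       sigma (v₁ * invol v₂ + v₂ * invol v₃) = 0 ∧
       sigma (v₂ * invol v₁ + v₃ * invol v₂) = 0 ∧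
       sigma (v₂ * invol v₂ + v₃ * invol v₃) = 1) := by
  subst hA
  simpa only [CharTwo.neg_eq] using
    groupRing_construction_selfDual_iff_over_F2u_general v₁ v₂ v₂ v₃ C hC
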